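/- arXiv:1906.01171 — 3 statements merged into one kernel-verified Lean document; each statement's English description precedes it below -/
import Mathlib

section
/- Let d ≥ 1, Δ > 0 and λ₁ ∈ (0,1). Then Q₀ is absolutely continuous with respect to P₀ and the Kullback–Leibler divergence satisfies KL(Q₀ ‖ P₀) = −log(λ₁(1+Δ)^d)/(1+Δ)^d + ((1+Δ)^d − 1)/(1+Δ)^d · log( ((1+Δ)^d − 1) / ((1−λ₁)(1+Δ)^d) ). -/
open MeasureTheory ProbabilityTheory
open scoped ENNReal

noncomputable section

/-- The closed annulus `{x : a ≤ ‖x‖ ≤ b}` in `ℝ^d` (Euclidean norm). -/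
def annulus (d : ℕ) (a b : ℝ) : Set (EuclideanSpace ℝ (Fin d)) :=
  {x | a ≤ ‖x‖ ∧ ‖x‖ ≤ b}

/-- The uniform probability measure on the annulus `A_d(a,b)`:
Lebesgue measure restricted to the annulus and normalized. -/
def U (d : ℕ) (a b : ℝ) : Measure (EuclideanSpace ℝ (Fin d)) :=
  (volume (annulus d a b))⁻¹ • volume.restrict (annulus d a b)

/-- `C_d`, the Lebesgue volume of the unit ball in `ℝ^d`. -/
def Cd (d : ℕ) : ℝ :=
  (volume (Metric.closedBall (0 : EuclideanSpace ℝ (Fin d)) 1)).toReal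

open Classical in
/-- Kullback–Leibler divergence: `∫ log (dμ/dν) dμ` if `μ ≪ ν`, and `+∞` otherwise. -/
def klDiv {X : Type*} [MeasurableSpace X] (μ ν : Measure X) : EReal :=
  if μ ≪ ν then ((∫ x, Real.log (μ.rnDeriv ν x).toReal ∂μ : ℝ) : EReal) else ⊤

/-- `P₀ = λ₁·U_d(0,1) + (1−λ₁)·U_d(1,1+Δ)`. -/
def P0 (d : ℕ) (Δ l1 : ℝ) : Measure (EuclideanSpace ℝ (Fin d)) :=
  ENNReal.ofReal l1 • U d 0 1 + ENNReal.ofReal (1 - l1) • U d 1 (1 + Δ)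

/-- `P₁ = λ₂·U_d(0,1) + (1−λ₂)·U_d(2,3)`. -/
def P1 (d : ℕ) (l2 : ℝ) : Measure (EuclideanSpace ℝ (Fin d)) :=
  ENNReal.ofReal l2 • U d 0 1 + ENNReal.ofReal (1 - l2) • U d 2 3

/-- `Q₀ = U_d(0,1+Δ)`. -/
def Q0 (d : ℕ) (Δ : ℝ) : Measure (EuclideanSpace ℝ (Fin d)) :=
  U d 0 (1 + Δ)

/-- Joint measure on `ℝ^d × {0,1}` with uniform class prior. -/
def joint (d : ℕ) (μ0 μ1 : Measure (EuclideanSpace ℝ (Fin d))) :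
    Measure (EuclideanSpace ℝ (Fin d) × Fin 2) :=
  (1/2 : ℝ≥0∞) • μ0.map (fun x => (x, 0)) + (1/2 : ℝ≥0∞) • μ1.map (fun x => (x, 1))

/-- Real-valued density of `μ` with respect to Lebesgue measure. -/
def f (d : ℕ) (μ : Measure (EuclideanSpace ℝ (Fin d))) (x : EuclideanSpace ℝ (Fin d)) : ℝ :=
  (μ.rnDeriv volume x).toReal

/-!
Up to the sphere `‖x‖ = 1`, which is Lebesgue-null, the ball of radius `1 + Δ` splits into the unit
ball and the outer annulus. Hence `Q₀` is a mixture of the same two mutually singular probability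
measures as `P₀`, with weights `w = (1 + Δ)⁻ᵈ` and `1 - w` given by the relative volumes. The
log-likelihood ratio is constant on each piece, so the divergence is that of two Bernoulli laws:
`w log (w / λ₁) + (1 - w) log ((1 - w) / (1 - λ₁))`.
-/

section KullbackLeibler

variable {X : Type*} [MeasurableSpace X] {μ μ₁ μ₂ ν₁ ν₂ : Measure X}

theorem klDiv_of_absolutelyContinuous {ν : Measure X} (h : μ ≪ ν) :
    klDiv μ ν = ((∫ x, llr μ ν x ∂μ : ℝ) : EReal) :=
  if_pos h

theorem llr_add_of_mutuallySingular [SigmaFinite μ₁] [SigmaFinite μ₂] [SigmaFinite ν₁]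
    [SigmaFinite ν₂] (hμ₁ : μ₁ ≪ ν₁) (hμ₂ : μ₂ ⟂ₘ ν₁) (hν : ν₁ ⟂ₘ ν₂) :
    llr (μ₁ + μ₂) (ν₁ + ν₂) =ᵐ[μ₁] llr μ₁ ν₁ := by
  have hright := Measure.rnDeriv_add_right_of_mutuallySingular (μ := μ₁ + μ₂) hν
  have hleft := Measure.rnDeriv_add_of_mutuallySingular μ₁ μ₂ ν₁ hμ₂
  filter_upwards [hμ₁.ae_le (hright.trans hleft)] with x hx
  simp only [llr, hx]

theorem klDiv_add_of_mutuallySingular [SigmaFinite μ₁] [SigmaFinite μ₂] [SigmaFinite ν₁]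
    [SigmaFinite ν₂] (hν : ν₁ ⟂ₘ ν₂) (h₁ : μ₁ ≪ ν₁) (h₂ : μ₂ ≪ ν₂)
    (hint₁ : Integrable (llr μ₁ ν₁) μ₁) (hint₂ : Integrable (llr μ₂ ν₂) μ₂) :
    klDiv (μ₁ + μ₂) (ν₁ + ν₂) = klDiv μ₁ ν₁ + klDiv μ₂ ν₂ := by
  have hllr₁ : llr (μ₁ + μ₂) (ν₁ + ν₂) =ᵐ[μ₁] llr μ₁ ν₁ :=
    llr_add_of_mutuallySingular h₁ (hν.symm.mono_ac h₂ .rfl) hν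
  have hllr₂ : llr (μ₁ + μ₂) (ν₁ + ν₂) =ᵐ[μ₂] llr μ₂ ν₂ := by
    rw [add_comm μ₁, add_comm ν₁]
    exact llr_add_of_mutuallySingular h₂ (hν.mono_ac h₁ .rfl) hν.symm
  rw [klDiv_of_absolutelyContinuous (h₁.add h₂), klDiv_of_absolutelyContinuous h₁,
    klDiv_of_absolutelyContinuous h₂,
    integral_add_measure (hint₁.congr hllr₁.symm) (hint₂.congr hllr₂.symm),
    integral_congr_ae hllr₁, integral_congr_ae hllr₂, EReal.coe_add]

variable {a b p q : ℝ≥0∞}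

theorem smul_absolutelyContinuous_smul (hp : p ≠ 0) : a • μ ≪ p • μ :=
  Measure.smul_absolutelyContinuous.trans (Measure.absolutelyContinuous_smul hp)

theorem llr_smul_smul [IsFiniteMeasure μ] (ha_top : a ≠ ∞) (hp : p ≠ 0) (hp_top : p ≠ ∞) :
    llr (a • μ) (p • μ) =ᵐ[a • μ] fun _ => Real.log (a.toReal / p.toReal) := by
  have : IsFiniteMeasure (a • μ) := μ.smul_finite ha_top
  refine Measure.ae_smul_measure ?_ a
  filter_upwards [Measure.rnDeriv_smul_right_of_ne_top (a • μ) μ hp hp_top,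
    Measure.rnDeriv_smul_left_of_ne_top μ μ ha_top, μ.rnDeriv_self] with x hright hleft hself
  simp [llr, hright, hleft, hself, div_eq_inv_mul]

theorem integrable_llr_smul_smul [IsFiniteMeasure μ] (ha_top : a ≠ ∞) (hp : p ≠ 0)
    (hp_top : p ≠ ∞) :
    Integrable (llr (a • μ) (p • μ)) (a • μ) := by
  have : IsFiniteMeasure (a • μ) := μ.smul_finite ha_top
  exact (integrable_const _).congr (llr_smul_smul ha_top hp hp_top).symm

theorem klDiv_smul_smul [IsFiniteMeasure μ] (ha_top : a ≠ ∞) (hp : p ≠ 0) (hp_top : p ≠ ∞) :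
    klDiv (a • μ) (p • μ) =
      ((μ.real Set.univ * (a.toReal * Real.log (a.toReal / p.toReal)) : ℝ) : EReal) := by
  rw [klDiv_of_absolutelyContinuous (smul_absolutelyContinuous_smul hp),
    integral_congr_ae (llr_smul_smul ha_top hp hp_top), integral_const,
    measureReal_ennreal_smul_apply, smul_eq_mul, mul_comm a.toReal, mul_assoc]

theorem klDiv_smul_add_smul_of_mutuallySingular {ν : Measure X} [IsFiniteMeasure μ]
    [IsFiniteMeasure ν] (h : μ ⟂ₘ ν) (ha_top : a ≠ ∞) (hb_top : b ≠ ∞) (hp : p ≠ 0)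
    (hp_top : p ≠ ∞) (hq : q ≠ 0) (hq_top : q ≠ ∞) :
    klDiv (a • μ + b • ν) (p • μ + q • ν) =
      ((μ.real Set.univ * (a.toReal * Real.log (a.toReal / p.toReal)) +
        ν.real Set.univ * (b.toReal * Real.log (b.toReal / q.toReal)) : ℝ) : EReal) := by
  have : IsFiniteMeasure (a • μ) := μ.smul_finite ha_top
  have : IsFiniteMeasure (b • ν) := ν.smul_finite hb_top
  have : IsFiniteMeasure (p • μ) := μ.smul_finite hp_top
  have : IsFiniteMeasure (q • ν) := ν.smul_finite hq_top
  have hsing : p • μ ⟂ₘ q • ν := ((h.smul p).symm.smul q).symm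
  rw [klDiv_add_of_mutuallySingular hsing (smul_absolutelyContinuous_smul hp)
      (smul_absolutelyContinuous_smul hq) (integrable_llr_smul_smul ha_top hp hp_top)
      (integrable_llr_smul_smul hb_top hq hq_top),
    klDiv_smul_smul ha_top hp hp_top, klDiv_smul_smul hb_top hq hq_top, EReal.coe_add]

end KullbackLeibler

section Conditioning

variable {X : Type*} [MeasurableSpace X] {μ : Measure X} {s t : Set X}

theorem measure_smul_cond (hs_top : μ s ≠ ∞) : μ s • μ[|s] = μ.restrict s := by
  rcases eq_or_ne (μ s) 0 with h0 | h0
  · rw [h0, zero_smul, Measure.restrict_eq_zero.2 h0]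
  · rw [ProbabilityTheory.cond, smul_smul, ENNReal.mul_inv_cancel h0 hs_top, one_smul]

theorem cond_union_eq_smul_add_smul (hst : AEDisjoint μ s t) (ht : NullMeasurableSet t μ)
    (hs_top : μ s ≠ ∞) (ht_top : μ t ≠ ∞) :
    μ[|s ∪ t] = (μ s / μ (s ∪ t)) • μ[|s] + (μ t / μ (s ∪ t)) • μ[|t] := by
  simp only [ENNReal.div_eq_inv_mul, ← smul_smul, ← smul_add, measure_smul_cond hs_top,
    measure_smul_cond ht_top, ← Measure.restrict_union₀ hst ht]
  rfl

theorem cond_mutuallySingular_cond (hst : AEDisjoint μ s t) (ht : NullMeasurableSet t μ) :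
    μ[|s] ⟂ₘ μ[|t] := by
  have hrestrict : μ.restrict s t = 0 := by
    rw [Measure.restrict_apply₀ (ht.mono_ac Measure.restrict_le_self.absolutelyContinuous)]
    exact hst.symm
  exact .mk (Measure.smul_absolutelyContinuous hrestrict) (ae_cond_mem₀ ht)
    (Set.union_compl_self t).ge

variable {p q : ℝ≥0∞}

theorem cond_union_absolutelyContinuous_smul_add_smul (hst : AEDisjoint μ s t)
    (ht : NullMeasurableSet t μ) (hs_top : μ s ≠ ∞) (ht_top : μ t ≠ ∞) (hp : p ≠ 0) (hq : q ≠ 0) :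
    μ[|s ∪ t] ≪ p • μ[|s] + q • μ[|t] := by
  rw [cond_union_eq_smul_add_smul hst ht hs_top ht_top]
  exact (smul_absolutelyContinuous_smul hp).add (smul_absolutelyContinuous_smul hq)

theorem klDiv_cond_union_smul_add_smul (hst : AEDisjoint μ s t) (ht : NullMeasurableSet t μ)
    (hs₀ : μ s ≠ 0) (hs_top : μ s ≠ ∞) (ht₀ : μ t ≠ 0) (ht_top : μ t ≠ ∞)
    (hp : p ≠ 0) (hp_top : p ≠ ∞) (hq : q ≠ 0) (hq_top : q ≠ ∞) :
    klDiv μ[|s ∪ t] (p • μ[|s] + q • μ[|t]) =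
      ((μ.real s / μ.real (s ∪ t) * Real.log (μ.real s / μ.real (s ∪ t) / p.toReal) +
        μ.real t / μ.real (s ∪ t) * Real.log (μ.real t / μ.real (s ∪ t) / q.toReal) : ℝ) :
        EReal) := by
  have := cond_isProbabilityMeasure_of_finite hs₀ hs_top
  have := cond_isProbabilityMeasure_of_finite ht₀ ht_top
  have hst₀ : μ (s ∪ t) ≠ 0 := fun h => hs₀ (measure_mono_null Set.subset_union_left h)
  rw [cond_union_eq_smul_add_smul hst ht hs_top ht_top, klDiv_smul_add_smul_of_mutuallySingular
    (cond_mutuallySingular_cond hst ht) (ENNReal.div_ne_top hs_top hst₀)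
    (ENNReal.div_ne_top ht_top hst₀) hp hp_top hq hq_top]
  simp only [probReal_univ, one_mul, ENNReal.toReal_div, ← measureReal_def]

end Conditioning

section Annulus

variable {d : ℕ} {a b c : ℝ}

theorem U_eq_cond (d : ℕ) (a b : ℝ) : U d a b = volume[|annulus d a b] :=
  rfl

theorem annulus_eq_closedBall_diff_ball (d : ℕ) (a b : ℝ) :
    annulus d a b = Metric.closedBall 0 b \ Metric.ball 0 a := by
  ext x
  simp [annulus, and_comm]

theorem measurableSet_annulus (d : ℕ) (a b : ℝ) : MeasurableSet (annulus d a b) := by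
  rw [annulus_eq_closedBall_diff_ball]
  exact measurableSet_closedBall.diff measurableSet_ball

theorem annulus_union_annulus (d : ℕ) (hab : a ≤ b) (hbc : b ≤ c) :
    annulus d a b ∪ annulus d b c = annulus d a c := by
  ext x
  simp only [annulus, Set.mem_union, Set.mem_ofPred_eq]
  grind

theorem aedisjoint_annulus (hd : d ≠ 0) (a b c : ℝ) :
    AEDisjoint volume (annulus d a b) (annulus d b c) := by
  have : NeZero d := ⟨hd⟩
  refine measure_mono_null (fun x hx => ?_)
    (Measure.addHaar_sphere volume (0 : EuclideanSpace ℝ (Fin d)) b)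
  exact mem_sphere_zero_iff_norm.2 (le_antisymm hx.1.2 hx.2.1)

theorem volume_annulus_ne_top (d : ℕ) (a b : ℝ) : volume (annulus d a b) ≠ ∞ := by
  rw [annulus_eq_closedBall_diff_ball]
  exact measure_ne_top_of_subset Set.sdiff_subset measure_closedBall_lt_top.ne

theorem Cd_pos (d : ℕ) : 0 < Cd d :=
  ENNReal.toReal_pos (Metric.measure_closedBall_pos _ _ one_pos).ne' measure_closedBall_lt_top.ne

theorem volume_real_annulus (hd : d ≠ 0) (ha : 0 ≤ a) (hab : a ≤ b) :
    volume.real (annulus d a b) = (b ^ d - a ^ d) * Cd d := by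
  have : NeZero d := ⟨hd⟩
  have hsub : Metric.ball (0 : EuclideanSpace ℝ (Fin d)) a ⊆ Metric.closedBall 0 b :=
    Metric.ball_subset_closedBall.trans (Metric.closedBall_subset_closedBall hab)
  rw [annulus_eq_closedBall_diff_ball, measureReal_sdiff hsub measurableSet_ball
      measure_closedBall_lt_top.ne,
    ← Measure.addHaar_real_closedBall_eq_addHaar_real_ball,
    Measure.addHaar_real_closedBall' _ _ (ha.trans hab), Measure.addHaar_real_closedBall' _ _ ha,
    finrank_euclideanSpace_fin, ← sub_mul]
  rfl

theorem volume_annulus_ne_zero (hd : d ≠ 0) (ha : 0 ≤ a) (hab : a < b) :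
    volume (annulus d a b) ≠ 0 := by
  rw [← measureReal_ne_zero_iff (volume_annulus_ne_top d a b), volume_real_annulus hd ha hab.le]
  exact mul_ne_zero (sub_pos.2 (pow_lt_pow_left₀ hab ha hd)).ne' (Cd_pos d).ne'

variable {p q : ℝ≥0∞}

theorem U_absolutelyContinuous_smul_add_smul (hd : d ≠ 0) (hab : a ≤ b) (hbc : b ≤ c) (hp : p ≠ 0)
    (hq : q ≠ 0) : U d a c ≪ p • U d a b + q • U d b c := by
  rw [U_eq_cond d a c, ← annulus_union_annulus d hab hbc]
  exact cond_union_absolutelyContinuous_smul_add_smul (aedisjoint_annulus hd a b c)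
    (measurableSet_annulus d b c).nullMeasurableSet (volume_annulus_ne_top d a b)
    (volume_annulus_ne_top d b c) hp hq

theorem klDiv_U_smul_add_smul (hd : d ≠ 0) (ha : 0 ≤ a) (hab : a < b) (hbc : b < c)
    (hp : p ≠ 0) (hp_top : p ≠ ∞) (hq : q ≠ 0) (hq_top : q ≠ ∞) :
    klDiv (U d a c) (p • U d a b + q • U d b c) =
      (((b ^ d - a ^ d) / (c ^ d - a ^ d) *
          Real.log ((b ^ d - a ^ d) / (c ^ d - a ^ d) / p.toReal) +
        (c ^ d - b ^ d) / (c ^ d - a ^ d) *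
          Real.log ((c ^ d - b ^ d) / (c ^ d - a ^ d) / q.toReal) : ℝ) : EReal) := by
  have hb : 0 ≤ b := ha.trans hab.le
  have hkl := klDiv_cond_union_smul_add_smul (aedisjoint_annulus hd a b c)
    (measurableSet_annulus d b c).nullMeasurableSet
    (volume_annulus_ne_zero hd ha hab) (volume_annulus_ne_top d a b)
    (volume_annulus_ne_zero hd hb hbc) (volume_annulus_ne_top d b c) hp hp_top hq hq_top
  rwa [annulus_union_annulus d hab.le hbc.le, volume_real_annulus hd ha hab.le,
    volume_real_annulus hd hb hbc.le, volume_real_annulus hd ha (hab.trans hbc).le,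
    mul_div_mul_right _ _ (Cd_pos d).ne', mul_div_mul_right _ _ (Cd_pos d).ne'] at hkl

end Annulus

/-- `Q₀ ≪ P₀` and the value of `KL(Q₀ ‖ P₀)`. -/
theorem stmt2 (d : ℕ) (hd : 1 ≤ d) (Δ l1 : ℝ) (hΔ : 0 < Δ)
    (hl1 : l1 ∈ Set.Ioo (0:ℝ) 1) :
    Q0 d Δ ≪ P0 d Δ l1 ∧
    klDiv (Q0 d Δ) (P0 d Δ l1) =
      ((-Real.log (l1 * (1 + Δ) ^ d) / (1 + Δ) ^ d +
        ((1 + Δ) ^ d - 1) / (1 + Δ) ^ d *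
          Real.log (((1 + Δ) ^ d - 1) / ((1 - l1) * (1 + Δ) ^ d)) : ℝ) : EReal) := by
  obtain ⟨hpos, hlt⟩ := hl1
  have hd₀ : d ≠ 0 := Nat.one_le_iff_ne_zero.1 hd
  have hΔ' : 1 < 1 + Δ := lt_add_of_pos_right 1 hΔ
  have hp : ENNReal.ofReal l1 ≠ 0 := (ENNReal.ofReal_pos.2 hpos).ne'
  have hq : ENNReal.ofReal (1 - l1) ≠ 0 := (ENNReal.ofReal_pos.2 (sub_pos.2 hlt)).ne'
  refine ⟨U_absolutelyContinuous_smul_add_smul hd₀ zero_le_one hΔ'.le hp hq, ?_⟩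
  rw [Q0, P0, klDiv_U_smul_add_smul hd₀ le_rfl one_pos hΔ' hp ENNReal.ofReal_ne_top hq
    ENNReal.ofReal_ne_top, ENNReal.toReal_ofReal hpos.le,
    ENNReal.toReal_ofReal (sub_nonneg.2 hlt.le)]
  congr 1
  rw [zero_pow hd₀, one_pow, sub_zero, sub_zero, div_div, div_div, mul_comm _ l1,
    mul_comm _ (1 - l1), one_div, one_div, Real.log_inv, inv_mul_eq_div]
end
end

section
/- Let ε > 0, d ≥ 1, Δ > 0 and λ₁, λ₂ ∈ (0,1). If λ₁ > 1/(1+Δ)^d and λ₁ < ε/(d·log(1+Δ)), then the joint measures satisfy KL(P ‖ Q) ≤ ε. -/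
open MeasureTheory ProbabilityTheory
open scoped ENNReal

noncomputable section

/-!
Writing `s` for the unit ball and `p = (1 + Δ)⁻ᵈ = Q₀(s)`, the class-`0` law `P₀` is `Q₀` with the
mass of `s` changed from `p` to `λ₁`, the conditional laws inside and outside `s` being the same.
Hence `KL(P₀ ‖ Q₀)` is the divergence between two Bernoulli laws,
`λ₁ log (λ₁ / p) + (1 - λ₁) log ((1 - λ₁) / (1 - p))`. When `p ≤ λ₁ ≤ 1` the second term is
nonpositive and the first is at most `λ₁ log p⁻¹ = λ₁ d log (1 + Δ)`. As `P` and `Q` agree on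
class `1`, `KL(P ‖ Q)` is half of this.
-/

/-- The Kullback–Leibler divergence between the Bernoulli laws with success probabilities `l` and
`p`. The junk value `log 0 = 0` gives the usual convention `0 log 0 = 0`, but the value is
meaningful only for `0 < p < 1`. -/
def bernoulliKL (l p : ℝ) : ℝ :=
  l * Real.log (l / p) + (1 - l) * Real.log ((1 - l) / (1 - p))

lemma bernoulliKL_le_mul_log_inv {l p : ℝ} (hp0 : 0 < p) (hp1 : p < 1) (hpl : p ≤ l)
    (hl1 : l ≤ 1) : bernoulliKL l p ≤ l * Real.log p⁻¹ := by
  have hl0 : 0 < l := hp0.trans_le hpl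
  have inside : Real.log (l / p) ≤ Real.log p⁻¹ := by
    rw [div_eq_mul_inv]
    exact Real.log_le_log (by positivity) (mul_le_of_le_one_left (by positivity) hl1)
  have outside : Real.log ((1 - l) / (1 - p)) ≤ 0 :=
    Real.log_nonpos (div_nonneg (by linarith) (by linarith))
      ((div_le_one (by linarith)).2 (by linarith))
  calc bernoulliKL l p
      ≤ l * Real.log p⁻¹ + (1 - l) * 0 :=
        add_le_add (mul_le_mul_of_nonneg_left inside hl0.le)
          (mul_le_mul_of_nonneg_left outside (by linarith))
    _ = l * Real.log p⁻¹ := by ring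

section Divergence

variable {X Y : Type*} [MeasurableSpace X] [MeasurableSpace Y]

lemma klDiv_withDensity (ν : Measure X) [SigmaFinite ν] {g : X → ℝ≥0∞} (hg : Measurable g) :
    klDiv (ν.withDensity g) ν = ((∫ x, Real.log (g x).toReal ∂ν.withDensity g : ℝ) : EReal) := by
  have hac : ν.withDensity g ≪ ν := withDensity_absolutelyContinuous ν g
  rw [klDiv, if_pos hac, EReal.coe_eq_coe_iff]
  refine integral_congr_ae ?_
  filter_upwards [hac.ae_eq (Measure.rnDeriv_withDensity ν hg)] with x hx
  rw [hx]

lemma map_withDensity_comp (μ : Measure X) {φ : X → Y} (hφ : Measurable φ) {g : Y → ℝ≥0∞}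
    (hg : Measurable g) : (μ.withDensity (g ∘ φ)).map φ = (μ.map φ).withDensity g := by
  ext s hs
  rw [Measure.map_apply hφ hs, withDensity_apply _ (hφ hs), withDensity_apply _ hs,
    setLIntegral_map hs hg hφ]
  rfl

/-- The law obtained from `μ` by giving `s` the mass `l` and its complement the mass `1 - l`, while
keeping the conditional laws on both. -/
def reweight (μ : Measure X) (s : Set X) (l : ℝ) : Measure X :=
  ENNReal.ofReal l • μ[|s] + ENNReal.ofReal (1 - l) • μ[|sᶜ]

/-- The density of `reweight μ s l` with respect to `μ`. -/
def reweightDensity (μ : Measure X) (s : Set X) (l : ℝ) : X → ℝ≥0∞ :=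
  s.indicator (fun _ => ENNReal.ofReal l * (μ s)⁻¹) +
    sᶜ.indicator (fun _ => ENNReal.ofReal (1 - l) * (μ sᶜ)⁻¹)

variable {μ : Measure X} {s : Set X} {l : ℝ}

lemma measurable_reweightDensity (hs : MeasurableSet s) : Measurable (reweightDensity μ s l) :=
  (measurable_const.indicator hs).add (measurable_const.indicator hs.compl)

lemma withDensity_reweightDensity (hs : MeasurableSet s) :
    μ.withDensity (reweightDensity μ s l) = reweight μ s l := by
  rw [reweightDensity, withDensity_add_left (measurable_const.indicator hs),
    withDensity_indicator hs, withDensity_indicator hs.compl, withDensity_const,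
    withDensity_const, mul_smul, mul_smul]
  rfl

lemma log_reweightDensity_of_mem (hl : 0 ≤ l) {x : X} (hx : x ∈ s) :
    Real.log (reweightDensity μ s l x).toReal = Real.log (l / μ.real s) := by
  simp [reweightDensity, hx, hl, Measure.real, div_eq_mul_inv]

lemma log_reweightDensity_of_notMem [IsProbabilityMeasure μ] (hs : MeasurableSet s) (hl : l ≤ 1)
    {x : X} (hx : x ∉ s) :
    Real.log (reweightDensity μ s l x).toReal = Real.log ((1 - l) / (1 - μ.real s)) := by
  rw [← probReal_compl_eq_one_sub hs]
  simp [reweightDensity, hx, hl, Measure.real, div_eq_mul_inv]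

theorem klDiv_reweight [IsProbabilityMeasure μ] (hs : MeasurableSet s) (hs0 : 0 < μ.real s)
    (hs1 : μ.real s < 1) (hl0 : 0 ≤ l) (hl1 : l ≤ 1) :
    klDiv (reweight μ s l) μ = (bernoulliKL l (μ.real s) : EReal) := by
  have : IsProbabilityMeasure μ[|s] :=
    cond_isProbabilityMeasure ((measureReal_ne_zero_iff).1 hs0.ne')
  have : IsProbabilityMeasure μ[|sᶜ] := cond_isProbabilityMeasure fun h => by
    linarith [probReal_compl_eq_one_sub hs (μ := μ), (measureReal_eq_zero_iff).2 h]
  have inside : (fun x => Real.log (reweightDensity μ s l x).toReal) =ᵐ[μ[|s]]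
      fun _ => Real.log (l / μ.real s) := by
    filter_upwards [ae_cond_mem hs] with x hx using log_reweightDensity_of_mem hl0 hx
  have outside : (fun x => Real.log (reweightDensity μ s l x).toReal) =ᵐ[μ[|sᶜ]]
      fun _ => Real.log ((1 - l) / (1 - μ.real s)) := by
    filter_upwards [ae_cond_mem hs.compl] with x hx using log_reweightDensity_of_notMem hs hl1 hx
  rw [← withDensity_reweightDensity hs, klDiv_withDensity μ (measurable_reweightDensity hs),
    withDensity_reweightDensity hs, reweight, EReal.coe_eq_coe_iff,
    integral_add_measure
      (((integrable_const _).congr inside.symm).smul_measure ENNReal.ofReal_ne_top)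
      (((integrable_const _).congr outside.symm).smul_measure ENNReal.ofReal_ne_top),
    integral_smul_measure, integral_smul_measure, integral_congr_ae inside,
    integral_congr_ae outside]
  simp [bernoulliKL, hl0, hl1]

end Divergence

section Joint

variable {d : ℕ} (μ μ' ν : Measure (EuclideanSpace ℝ (Fin d)))

instance sigmaFinite_joint [SigmaFinite μ] [SigmaFinite ν] : SigmaFinite (joint d μ ν) := by
  have h0 : SigmaFinite (μ.map fun x => (x, (0 : Fin 2))) :=
    (MeasurableEmbedding.prodMk_right MeasurableEmbedding.id 0).sigmaFinite_map
  have h1 : SigmaFinite (ν.map fun x => (x, (1 : Fin 2))) :=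
    (MeasurableEmbedding.prodMk_right MeasurableEmbedding.id 1).sigmaFinite_map
  have half_le (ρ : Measure (EuclideanSpace ℝ (Fin d) × Fin 2)) : (1 / 2 : ℝ≥0∞) • ρ ≤ ρ :=
    fun _ => mul_le_of_le_one_left zero_le (by simp)
  exact Measure.sigmaFinite_of_le _ (add_le_add (half_le _) (half_le _))

lemma joint_prod_singleton_zero {s : Set (EuclideanSpace ℝ (Fin d))} (hs : MeasurableSet s) :
    joint d μ ν (s ×ˢ {0}) = 1 / 2 * μ s := by
  have hs0 : MeasurableSet (s ×ˢ ({0} : Set (Fin 2))) := hs.prod (measurableSet_singleton 0)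
  rw [joint, Measure.add_apply, Measure.smul_apply, Measure.smul_apply,
    Measure.map_apply (by fun_prop) hs0, Measure.map_apply (by fun_prop) hs0]
  simp

lemma restrict_joint_snd_eq_zero :
    (joint d μ ν).restrict (Prod.snd ⁻¹' {0}) =
      (1 / 2 : ℝ≥0∞) • μ.map fun x => (x, (0 : Fin 2)) := by
  have hs : MeasurableSet (Prod.snd ⁻¹' {0} : Set (EuclideanSpace ℝ (Fin d) × Fin 2)) :=
    measurable_snd (measurableSet_singleton 0)
  rw [joint, Measure.restrict_add, Measure.restrict_smul, Measure.restrict_smul,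
    Measure.restrict_map (by fun_prop) hs, Measure.restrict_map (by fun_prop) hs]
  simp [← Set.preimage_comp, Function.comp_def]

lemma integral_joint_of_forall_one_eq_zero {F : EuclideanSpace ℝ (Fin d) × Fin 2 → ℝ}
    (hF : ∀ x, F (x, 1) = 0) : ∫ z, F z ∂joint d μ ν = 1 / 2 * ∫ x, F (x, 0) ∂μ := by
  have vanish : ∀ z, z ∉ (Prod.snd ⁻¹' {0} : Set (EuclideanSpace ℝ (Fin d) × Fin 2)) →
      F z = 0 := by
    rintro ⟨x, i⟩ hi
    rw [Fin.eq_one_of_ne_zero i hi, hF]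
  have embedding : MeasurableEmbedding fun x : EuclideanSpace ℝ (Fin d) => (x, (0 : Fin 2)) :=
    .prodMk_right .id 0
  rw [← setIntegral_eq_integral_of_forall_compl_eq_zero vanish, restrict_joint_snd_eq_zero,
    integral_smul_measure, embedding.integral_map]
  simp

lemma joint_absolutelyContinuous_iff : joint d μ ν ≪ joint d μ' ν ↔ μ ≪ μ' := by
  refine ⟨fun h => Measure.AbsolutelyContinuous.mk fun s hs hnull => ?_, fun h => ?_⟩
  · have hprod : joint d μ ν (s ×ˢ {0}) = 0 :=
      h (by rw [joint_prod_singleton_zero μ' ν hs, hnull, mul_zero])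
    simpa [joint_prod_singleton_zero μ ν hs] using hprod
  · exact ((h.map (by fun_prop)).smul _).add .rfl

/-- The density on `ℝ^d × {0,1}` that equals `g` on class `0` and `1` on class `1`; it reweights
the class-`0` part of a joint measure only. -/
def classZeroDensity (g : EuclideanSpace ℝ (Fin d) → ℝ≥0∞) :
    EuclideanSpace ℝ (Fin d) × Fin 2 → ℝ≥0∞ :=
  fun z => if z.2 = 0 then g z.1 else 1

variable {g : EuclideanSpace ℝ (Fin d) → ℝ≥0∞}

lemma measurable_classZeroDensity (hg : Measurable g) : Measurable (classZeroDensity g) :=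
  Measurable.ite (measurable_snd (measurableSet_singleton 0)) (hg.comp measurable_fst)
    measurable_const

lemma joint_withDensity_left (hg : Measurable g) :
    joint d (μ.withDensity g) ν = (joint d μ ν).withDensity (classZeroDensity g) := by
  have hG := measurable_classZeroDensity hg
  rw [joint, joint, withDensity_add_measure, withDensity_smul_measure, withDensity_smul_measure,
    ← map_withDensity_comp μ (by fun_prop) hG, ← map_withDensity_comp ν (by fun_prop) hG]
  simp [Function.comp_def, classZeroDensity]

theorem klDiv_joint_left [SFinite μ] [SigmaFinite μ'] [SigmaFinite ν] :
    klDiv (joint d μ ν) (joint d μ' ν) = ((1 / 2 : ℝ) : EReal) * klDiv μ μ' := by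
  by_cases hac : μ ≪ μ'
  · have hg : Measurable (μ.rnDeriv μ') := Measure.measurable_rnDeriv μ μ'
    have density : (joint d μ' ν).withDensity (classZeroDensity (μ.rnDeriv μ')) = joint d μ ν := by
      rw [← joint_withDensity_left μ' ν hg, Measure.withDensity_rnDeriv_eq μ μ' hac]
    have klDiv_left : klDiv μ μ' = ((∫ x, Real.log (μ.rnDeriv μ' x).toReal ∂μ : ℝ) : EReal) :=
      if_pos hac
    rw [klDiv_left, ← density, klDiv_withDensity _ (measurable_classZeroDensity hg), density,
      integral_joint_of_forall_one_eq_zero μ ν (by simp [classZeroDensity]), EReal.coe_mul]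
    rfl
  · rw [klDiv, klDiv, if_neg hac, if_neg (mt (joint_absolutelyContinuous_iff μ μ' ν).1 hac),
      EReal.coe_mul_top_of_pos (by norm_num)]

end Joint

lemma cond_congr_ae {X : Type*} [MeasurableSpace X] {μ : Measure X} {s t : Set X}
    (h : s =ᵐ[μ] t) : μ[|s] = μ[|t] := by
  rw [ProbabilityTheory.cond, ProbabilityTheory.cond, measure_congr h,
    Measure.restrict_congr_set h]

section Annulus

open Metric

variable (d : ℕ) {a b : ℝ}

lemma annulus_zero_left (b : ℝ) : annulus d 0 b = closedBall 0 b := by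
  ext x
  simp [annulus]

lemma U_zero_left (b : ℝ) : U d 0 b = volume[|closedBall 0 b] := by
  rw [← annulus_zero_left]
  rfl

instance isFiniteMeasure_U (a b : ℝ) : IsFiniteMeasure (U d a b) :=
  inferInstanceAs (IsFiniteMeasure volume[|annulus d a b])

lemma isProbabilityMeasure_U_zero_left (hb : 0 < b) : IsProbabilityMeasure (U d 0 b) := by
  rw [U_zero_left]
  exact cond_isProbabilityMeasure_of_finite (measure_closedBall_pos volume 0 hb).ne'
    measure_closedBall_lt_top.ne

lemma U_zero_left_real_closedBall (ha : 0 ≤ a) (hab : a ≤ b) :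
    (U d 0 b).real (closedBall 0 a) = a ^ d / b ^ d := by
  have unit_ball_ne_zero : volume.real (closedBall (0 : EuclideanSpace ℝ (Fin d)) 1) ≠ 0 :=
    (measureReal_ne_zero_iff measure_closedBall_lt_top.ne).2
      (measure_closedBall_pos volume 0 one_pos).ne'
  rw [Measure.real, U_zero_left, cond_apply isClosed_closedBall.measurableSet,
    Set.inter_eq_self_of_subset_right (closedBall_subset_closedBall hab),
    ENNReal.toReal_mul, ENNReal.toReal_inv, ← Measure.real, ← Measure.real,
    Measure.addHaar_real_closedBall' volume 0 ha,
    Measure.addHaar_real_closedBall' volume 0 (ha.trans hab), finrank_euclideanSpace_fin]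
  field_simp

lemma U_zero_left_cond_closedBall (hab : a ≤ b) :
    (U d 0 b)[|closedBall 0 a] = U d 0 a := by
  rw [U_zero_left, U_zero_left,
    cond_cond_eq_cond_inter' isClosed_closedBall.measurableSet isClosed_closedBall.measurableSet
      measure_closedBall_lt_top.ne,
    Set.inter_eq_self_of_subset_right (closedBall_subset_closedBall hab)]

lemma closedBall_inter_compl_closedBall_ae_eq_annulus (ha : a ≠ 0) :
    (closedBall 0 b ∩ (closedBall 0 a)ᶜ : Set (EuclideanSpace ℝ (Fin d)))
      =ᵐ[volume] annulus d a b := by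
  have sphere_null : volume (sphere (0 : EuclideanSpace ℝ (Fin d)) a) = 0 :=
    Measure.addHaar_sphere_of_ne_zero volume 0 ha
  rw [Filter.eventuallyEq_set]
  filter_upwards [measure_eq_zero_iff_ae_notMem.1 sphere_null] with x hx
  have hxa : a ≠ ‖x‖ := fun h => hx (by simp [h])
  simp [annulus, lt_iff_le_and_ne, hxa, and_comm]

lemma U_zero_left_cond_compl_closedBall (ha : a ≠ 0) :
    (U d 0 b)[|(closedBall 0 a)ᶜ] = U d a b := by
  rw [U_zero_left,
    cond_cond_eq_cond_inter' isClosed_closedBall.measurableSet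
      isClosed_closedBall.measurableSet.compl measure_closedBall_lt_top.ne,
    cond_congr_ae (closedBall_inter_compl_closedBall_ae_eq_annulus d ha)]
  rfl

-- Mathlib has the finiteness instance for `ℝ≥0` scalars only; `ENNReal.ofReal l • μ` is
-- definitionally `l.toNNReal • μ`.
instance isFiniteMeasure_P0 (Δ l : ℝ) : IsFiniteMeasure (P0 d Δ l) :=
  inferInstanceAs (IsFiniteMeasure (l.toNNReal • U d 0 1 + (1 - l).toNNReal • U d 1 (1 + Δ)))

instance isFiniteMeasure_P1 (l : ℝ) : IsFiniteMeasure (P1 d l) :=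
  inferInstanceAs (IsFiniteMeasure (l.toNNReal • U d 0 1 + (1 - l).toNNReal • U d 2 3))

end Annulus

lemma P0_eq_reweight (d : ℕ) {Δ : ℝ} (hΔ : 0 ≤ Δ) (l : ℝ) :
    P0 d Δ l = reweight (Q0 d Δ) (Metric.closedBall 0 1) l := by
  rw [reweight, Q0, U_zero_left_cond_closedBall d (by linarith),
    U_zero_left_cond_compl_closedBall d one_ne_zero, P0]

theorem klDiv_P0_Q0 {d : ℕ} (hd : d ≠ 0) {Δ l : ℝ} (hΔ : 0 < Δ) (hl0 : 0 ≤ l) (hl1 : l ≤ 1) :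
    klDiv (P0 d Δ l) (Q0 d Δ) = (bernoulliKL l (1 / (1 + Δ) ^ d) : EReal) := by
  have : IsProbabilityMeasure (Q0 d Δ) := isProbabilityMeasure_U_zero_left d (by linarith)
  have hp : (Q0 d Δ).real (Metric.closedBall 0 1) = 1 / (1 + Δ) ^ d := by
    rw [Q0, U_zero_left_real_closedBall d zero_le_one (by linarith), one_pow]
  have hpow : 1 < (1 + Δ) ^ d := one_lt_pow₀ (by linarith) hd
  rw [P0_eq_reweight d hΔ.le, klDiv_reweight Metric.isClosed_closedBall.measurableSet
    (hp ▸ by positivity) (hp ▸ (div_lt_one (by linarith)).2 hpow) hl0 hl1, hp]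

theorem klDiv_joint_P0_Q0_le {d : ℕ} (hd : d ≠ 0) {Δ l : ℝ} (hΔ : 0 < Δ)
    (hpl : 1 / (1 + Δ) ^ d ≤ l) (hl1 : l ≤ 1) (ν : Measure (EuclideanSpace ℝ (Fin d)))
    [SigmaFinite ν] :
    klDiv (joint d (P0 d Δ l) ν) (joint d (Q0 d Δ) ν) ≤
      ((l * (d * Real.log (1 + Δ)) / 2 : ℝ) : EReal) := by
  have hp0 : 0 < 1 / (1 + Δ) ^ d := by positivity
  have hp1 : 1 / (1 + Δ) ^ d < 1 := (div_lt_one (by positivity)).2 (one_lt_pow₀ (by linarith) hd)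
  have : IsProbabilityMeasure (Q0 d Δ) := isProbabilityMeasure_U_zero_left d (by linarith)
  have bound : bernoulliKL l (1 / (1 + Δ) ^ d) ≤ l * (d * Real.log (1 + Δ)) := by
    simpa using bernoulliKL_le_mul_log_inv hp0 hp1 hpl hl1
  rw [klDiv_joint_left, klDiv_P0_Q0 hd hΔ (hp0.le.trans hpl) hl1, ← EReal.coe_mul,
    EReal.coe_le_coe_iff]
  linarith

theorem stmt6_general {ε : ℝ} {d : ℕ} (hd : d ≠ 0) {Δ l : ℝ} (hΔ : 0 < Δ) (hl1 : l ≤ 1)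
    (h1 : 1 / (1 + Δ) ^ d ≤ l) (h2 : l ≤ 2 * (ε / (d * Real.log (1 + Δ))))
    (ν : Measure (EuclideanSpace ℝ (Fin d))) [SigmaFinite ν] :
    klDiv (joint d (P0 d Δ l) ν) (joint d (Q0 d Δ) ν) ≤ (ε : EReal) := by
  have hlog : 0 < d * Real.log (1 + Δ) :=
    mul_pos (by positivity) (Real.log_pos (by linarith))
  rw [← mul_div_assoc, le_div_iff₀ hlog] at h2
  exact (klDiv_joint_P0_Q0_le hd hΔ h1 hl1 ν).trans (EReal.coe_le_coe_iff.2 (by linarith))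

/-- if `λ₁ > 1/(1+Δ)^d` and `λ₁ < ε/(d·log(1+Δ))` then `KL(P ‖ Q) ≤ ε`. -/
theorem stmt6 (ε : ℝ) (hε : 0 < ε) (d : ℕ) (hd : 1 ≤ d) (Δ l1 l2 : ℝ) (hΔ : 0 < Δ)
    (hl1 : l1 ∈ Set.Ioo (0:ℝ) 1) (hl2 : l2 ∈ Set.Ioo (0:ℝ) 1)
    (h1 : 1 / (1 + Δ) ^ d < l1) (h2 : l1 < ε / (d * Real.log (1 + Δ))) :
    klDiv (joint d (P0 d Δ l1) (P1 d l2)) (joint d (Q0 d Δ) (P1 d l2)) ≤ (ε : EReal) := by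
  exact stmt6_general (by lia) hΔ hl1.2.le h1.le (by linarith [hl1.1]) (P1 d l2)
end
end

section
/- Let a > 1 be a real number and let λ₁ ∈ ℝ satisfy 1/a < λ₁ < 1. Then −log(λ₁ a)/a + ((a−1)/a)·log( (a−1) / ((1−λ₁)a) ) ≤ log( 1/(1−λ₁) ). -/
open MeasureTheory ProbabilityTheory
open scoped ENNReal

noncomputable section

/-- The relative entropy `KL(Ber(q) ‖ Ber(p))` of two Bernoulli distributions. With `a = (1+Δ)^d`,
`Q₀` and `P₀` give the unit ball the masses `1/a` and `λ₁`, and both are uniform on the ball and on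
the shell around it, so `KL(Q₀ ‖ P₀)` is this quantity at `q = 1/a`, `p = λ₁`.
The convention `0 * log 0 = 0` covers `q = 0` and `q = 1`; when `p` is `0` or `1` the value agrees
with the relative entropy only for `q = p`. -/
def binRelEntropy (q p : ℝ) : ℝ :=
  q * Real.log (q / p) + (1 - q) * Real.log ((1 - q) / (1 - p))

lemma mul_log_div_nonpos {x y : ℝ} (hx : 0 ≤ x) (hxy : x ≤ y) : x * Real.log (x / y) ≤ 0 := by
  have hy : 0 ≤ y := hx.trans hxy
  exact mul_nonpos_of_nonneg_of_nonpos hx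
    (Real.log_nonpos (div_nonneg hx hy) (div_le_one_of_le₀ hxy hy))

lemma mul_log_div_le_log_one_div {x y : ℝ} (hx₀ : 0 ≤ x) (hx₁ : x ≤ 1) (hy₀ : 0 < y)
    (hy₁ : y ≤ 1) : x * Real.log (x / y) ≤ Real.log (1 / y) := by
  have hlog : 0 ≤ Real.log (1 / y) := Real.log_nonneg (one_le_one_div hy₀ hy₁)
  obtain rfl | hx := hx₀.eq_or_lt
  · simpa only [zero_mul] using hlog
  calc x * Real.log (x / y) ≤ x * Real.log (1 / y) := by gcongr
    _ ≤ Real.log (1 / y) := mul_le_of_le_one_left hlog hx₁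

lemma binRelEntropy_le_log_one_div {q p : ℝ} (hq : 0 ≤ q) (hqp : q ≤ p) (hp : p < 1) :
    binRelEntropy q p ≤ Real.log (1 / (1 - p)) := by
  have hball : q * Real.log (q / p) ≤ 0 := mul_log_div_nonpos hq hqp
  have hshell : (1 - q) * Real.log ((1 - q) / (1 - p)) ≤ Real.log (1 / (1 - p)) :=
    mul_log_div_le_log_one_div (by linarith) (by linarith) (by linarith) (by linarith)
  simpa only [binRelEntropy, zero_add] using add_le_add hball hshell

lemma binRelEntropy_one_div {a : ℝ} (ha : a ≠ 0) (p : ℝ) :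
    binRelEntropy (1 / a) p =
      -Real.log (p * a) / a + (a - 1) / a * Real.log ((a - 1) / ((1 - p) * a)) := by
  have hball : Real.log (1 / a / p) = -Real.log (p * a) := by
    rw [div_div, mul_comm, one_div, Real.log_inv]
  have hshell : 1 - 1 / a = (a - 1) / a := one_sub_div ha
  rw [binRelEntropy, hball, hshell, one_div_mul_eq_div, div_div, mul_comm a]

/-- real-number bound used to control `KL(Q₀ ‖ P₀)`, with `a = (1+Δ)^d`. -/
theorem stmt7 (a l1 : ℝ) (ha : 1 < a) (h1 : 1 / a < l1) (h2 : l1 < 1) :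
    -Real.log (l1 * a) / a + (a - 1) / a * Real.log ((a - 1) / ((1 - l1) * a)) ≤
      Real.log (1 / (1 - l1)) := by
  have ha₀ : 0 < a := zero_lt_one.trans ha
  rw [← binRelEntropy_one_div ha₀.ne']
  exact binRelEntropy_le_log_one_div (one_div_nonneg.2 ha₀.le) h1.le h2
end
end
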